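/- (Spacetime bound for the inhomogeneous term.) For each γ ∈ (0,1/8] there exists a constant C such that for all 0 ≤ T ≤ t: ∫_T^t ( ∫_{ℝ³} log⁴(2+τ+|x|) · w(|x|−τ)^{1 − 2γ/(1+2γ)} / ((1+τ+|x|)⁴ (1+||x|−τ|)²) dx )^{1/2} dτ ≤ C log⁴(2+t). -/

import Mathlib

open MeasureTheory

noncomputable def pd (μ : Fin 4) (f : (Fin 4 → ℝ) → ℝ) (x : Fin 4 → ℝ) : ℝ :=
  fderiv ℝ f x (Pi.single μ 1)

noncomputable def pd3 (i : Fin 3) (f : (Fin 3 → ℝ) → ℝ) (x : Fin 3 → ℝ) : ℝ :=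
  fderiv ℝ f x (Pi.single i 1)

noncomputable def rad (p : Fin 4 → ℝ) : ℝ := Real.sqrt (∑ i : Fin 3, (p i.succ) ^ 2)

noncomputable def rad3 (y : Fin 3 → ℝ) : ℝ := Real.sqrt (∑ i : Fin 3, (y i) ^ 2)

noncomputable def spt (t : ℝ) (y : Fin 3 → ℝ) : Fin 4 → ℝ := ![t, y 0, y 1, y 2]

noncomputable def minkVF : Fin 11 → (Fin 4 → ℝ) → Fin 4 → ℝ :=
  ![fun _ => Pi.single 0 1,
    fun _ => Pi.single 1 1,
    fun _ => Pi.single 2 1,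
    fun _ => Pi.single 3 1,
    fun p => p 1 • (Pi.single 2 1 : Fin 4 → ℝ) - p 2 • (Pi.single 1 1 : Fin 4 → ℝ),
    fun p => p 1 • (Pi.single 3 1 : Fin 4 → ℝ) - p 3 • (Pi.single 1 1 : Fin 4 → ℝ),
    fun p => p 2 • (Pi.single 3 1 : Fin 4 → ℝ) - p 3 • (Pi.single 2 1 : Fin 4 → ℝ),
    fun p => p 0 • (Pi.single 1 1 : Fin 4 → ℝ) + p 1 • (Pi.single 0 1 : Fin 4 → ℝ),
    fun p => p 0 • (Pi.single 2 1 : Fin 4 → ℝ) + p 2 • (Pi.single 0 1 : Fin 4 → ℝ),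
    fun p => p 0 • (Pi.single 3 1 : Fin 4 → ℝ) + p 3 • (Pi.single 0 1 : Fin 4 → ℝ),
    fun p => p]

noncomputable def GammaList : List (Fin 11) → ((Fin 4 → ℝ) → ℝ) → (Fin 4 → ℝ) → ℝ
  | [] => fun f p => f p
  | k :: I => fun f p => fderiv ℝ (GammaList I f) p (minkVF k p)

noncomputable def derivNormSq (f : (Fin 4 → ℝ) → ℝ) (p : Fin 4 → ℝ) : ℝ :=
  ∑ μ : Fin 4, (pd μ f p) ^ 2

noncomputable def derivNorm (f : (Fin 4 → ℝ) → ℝ) (p : Fin 4 → ℝ) : ℝ :=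
  Real.sqrt (derivNormSq f p)

noncomputable def dS (f : (Fin 4 → ℝ) → ℝ) (p : Fin 4 → ℝ) : ℝ :=
  (1 / 2) * (pd 0 f p + ∑ i : Fin 3, (p i.succ / rad p) * pd i.succ f p)

noncomputable def dQ (f : (Fin 4 → ℝ) → ℝ) (p : Fin 4 → ℝ) : ℝ :=
  (1 / 2) * ((∑ i : Fin 3, (p i.succ / rad p) * pd i.succ f p) - pd 0 f p)

noncomputable def angSq (f : (Fin 4 → ℝ) → ℝ) (p : Fin 4 → ℝ) : ℝ :=
  (1 / 2) * (∑ i : Fin 3, ∑ j : Fin 3,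
    ((p i.succ / rad p) * pd j.succ f p - (p j.succ / rad p) * pd i.succ f p) ^ 2)

noncomputable def goodNormSq (f : (Fin 4 → ℝ) → ℝ) (p : Fin 4 → ℝ) : ℝ :=
  (dS f p) ^ 2 + angSq f p

noncomputable def goodNorm (f : (Fin 4 → ℝ) → ℝ) (p : Fin 4 → ℝ) : ℝ :=
  Real.sqrt (goodNormSq f p)

noncomputable def gradSq (f : (Fin 4 → ℝ) → ℝ) (p : Fin 4 → ℝ) : ℝ :=
  (pd 0 f p) ^ 2 + ∑ i : Fin 3, (pd i.succ f p) ^ 2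

noncomputable def Lup (p : Fin 4 → ℝ) : Fin 4 → ℝ :=
  ![1, p 1 / rad p, p 2 / rad p, p 3 / rad p]

noncomputable def Llow (p : Fin 4 → ℝ) : Fin 4 → ℝ :=
  ![-1, p 1 / rad p, p 2 / rad p, p 3 / rad p]

noncomputable def Lbup (p : Fin 4 → ℝ) : Fin 4 → ℝ :=
  ![1, -(p 1 / rad p), -(p 2 / rad p), -(p 3 / rad p)]

noncomputable def Evec : Fin 3 → (Fin 4 → ℝ) → Fin 4 → ℝ :=
  ![fun p => (p 2 / rad p) • (Pi.single 3 1 : Fin 4 → ℝ) - (p 3 / rad p) • (Pi.single 2 1 : Fin 4 → ℝ),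
    fun p => (p 1 / rad p) • (Pi.single 3 1 : Fin 4 → ℝ) - (p 3 / rad p) • (Pi.single 1 1 : Fin 4 → ℝ),
    fun p => (p 1 / rad p) • (Pi.single 2 1 : Fin 4 → ℝ) - (p 2 / rad p) • (Pi.single 1 1 : Fin 4 → ℝ)]

noncomputable def frameVF : Fin 5 → (Fin 4 → ℝ) → Fin 4 → ℝ :=
  ![Lup, Lbup, Evec 0, Evec 1, Evec 2]

noncomputable def mInv : Fin 4 → Fin 4 → ℝ :=
  fun α β => if α = β then (if α = 0 then -1 else 1) else 0

noncomputable def wgt (γ q : ℝ) : ℝ :=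
  if 0 ≤ q then 1 + (1 + |q|) ^ (1 + 2 * γ) else 1 + (1 + |q|) ^ (-(γ / 2))

noncomputable def wgt' (γ q : ℝ) : ℝ :=
  if 0 ≤ q then (1 + 2 * γ) * (1 + |q|) ^ (2 * γ) else (γ / 2) * (1 + |q|) ^ (-(γ / 2) - 1)

noncomputable def matNorm (H : (Fin 4 → ℝ) → Fin 4 → Fin 4 → ℝ) (p : Fin 4 → ℝ) : ℝ :=
  Real.sqrt (∑ α : Fin 4, ∑ β : Fin 4, (H p α β) ^ 2)

noncomputable def matLL (H : (Fin 4 → ℝ) → Fin 4 → Fin 4 → ℝ) (p : Fin 4 → ℝ) : ℝ :=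
  |∑ α : Fin 4, ∑ β : Fin 4, H p α β * Llow p α * Llow p β|

noncomputable def dmatNorm (H : (Fin 4 → ℝ) → Fin 4 → Fin 4 → ℝ) (p : Fin 4 → ℝ) : ℝ :=
  Real.sqrt (∑ c : Fin 4, ∑ α : Fin 4, ∑ β : Fin 4, (pd c (fun y => H y α β) p) ^ 2)

noncomputable def dmatLL (H : (Fin 4 → ℝ) → Fin 4 → Fin 4 → ℝ) (p : Fin 4 → ℝ) : ℝ :=
  Real.sqrt (∑ u : Fin 5,
    (∑ α : Fin 4, ∑ β : Fin 4,
      fderiv ℝ (fun y => H y α β) p (frameVF u p) * Llow p α * Llow p β) ^ 2)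

noncomputable def gdmatNorm (H : (Fin 4 → ℝ) → Fin 4 → Fin 4 → ℝ) (p : Fin 4 → ℝ) : ℝ :=
  Real.sqrt (∑ α : Fin 4, ∑ β : Fin 4, goodNormSq (fun y => H y α β) p)

lemma aux_int (ε : ℝ) (hε : 0 < ε) :
    ∫ u in Set.Ioi (0:ℝ), (1 + u) ^ (-(1 + ε)) = 1 / ε := by
  have h := MeasureTheory.integral_Ioi_of_hasDerivAt_of_tendsto' (a := (0:ℝ))
    (f := fun u => -(1/ε) * (1 + u) ^ (-ε)) (f' := fun u => (1 + u) ^ (-(1 + ε))) (m := 0) ?_ ?_ ?_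
  · rw [h]; simp
  · intro x hx
    have hx' : (0:ℝ) < 1 + x := by have : (0:ℝ) ≤ x := hx; linarith
    have h1 : HasDerivAt (fun u : ℝ => 1 + u) 1 x := (hasDerivAt_id x).const_add 1
    have h2 := (h1.rpow_const (p := -ε) (Or.inl hx'.ne')).const_mul (-(1/ε))
    have h3 : -(1/ε) * (1 * -ε * (1 + x) ^ (-ε - 1)) = (1 + x) ^ (-(1 + ε)) := by
      have : -ε - 1 = -(1 + ε) := by ring
      rw [this]; field_simp
    rw [h3] at h2
    exact h2
  · have := integrableOn_add_rpow_Ioi_of_lt (a := -(1+ε)) (c := 0) (m := 1) (by linarith) (by norm_num)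
    simpa [add_comm] using this
  · have h1 : Filter.Tendsto (fun u : ℝ => 1 + u) Filter.atTop Filter.atTop :=
      Filter.tendsto_atTop_add_const_left _ _ Filter.tendsto_id
    simpa using ((tendsto_rpow_neg_atTop hε).comp h1).const_mul (-(1/ε))

lemma aux_integrable (ε τ : ℝ) (hε : 0 < ε) :
    Integrable (fun r : ℝ => (1 + |r - τ|) ^ (-(1 + ε))) := by
  have := integrable_one_add_norm (E := ℝ) (μ := volume) (r := 1 + ε) (by simp [hε])
  simpa [Real.norm_eq_abs] using this.comp_sub_right τ

lemma aux_int2 (ε τ : ℝ) (hε : 0 < ε) :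
    ∫ r in Set.Ioi (0:ℝ), (1 + |r - τ|) ^ (-(1 + ε)) ≤ 2 / ε := by
  calc _ ≤ ∫ r : ℝ, (1 + |r - τ|) ^ (-(1 + ε)) := by
        apply setIntegral_le_integral (aux_integrable ε τ hε)
        exact Filter.Eventually.of_forall fun r => by simp only [Pi.zero_apply]; positivity
    _ = ∫ r : ℝ, (1 + |r|) ^ (-(1 + ε)) :=
        integral_sub_right_eq_self (fun r : ℝ => (1 + |r|) ^ (-(1 + ε))) τ
    _ = 2 * ∫ r in Set.Ioi (0:ℝ), (1 + r) ^ (-(1 + ε)) :=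
        integral_comp_abs (f := fun r => (1 + r) ^ (-(1 + ε)))
    _ = 2 / ε := by rw [aux_int ε hε]; ring

lemma aux_radial (f : ℝ → ℝ) : ∃ c : ℝ, c = 3 * volume.real (Metric.ball (0 : EuclideanSpace ℝ (Fin 3)) 1) ∧
    ∫ y : Fin 3 → ℝ, f (rad3 y) = c * ∫ r in Set.Ioi (0:ℝ), r ^ 2 * f r := by
  refine ⟨_, rfl, ?_⟩
  have h1 := integral_fun_norm_addHaar (volume : Measure (EuclideanSpace ℝ (Fin 3))) f
  have h2 := (PiLp.volume_preserving_toLp (Fin 3)).integral_comp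
    (MeasurableEquiv.toLp 2 _).measurableEmbedding (fun x : EuclideanSpace ℝ (Fin 3) => f ‖x‖)
  have h3 : ∀ y : Fin 3 → ℝ, ‖(WithLp.toLp 2 y : EuclideanSpace ℝ (Fin 3))‖ = rad3 y := by
    intro y
    simp [EuclideanSpace.norm_eq, rad3, sq_abs]
  have h4 : ∫ y : Fin 3 → ℝ, f (rad3 y) =
      ∫ y : Fin 3 → ℝ, f ‖(WithLp.toLp 2 y : EuclideanSpace ℝ (Fin 3))‖ := by
    simp only [h3]
  rw [h4]
  refine h2.trans (h1.trans ?_)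
  simp [mul_assoc]

lemma wgt_bound (γ q : ℝ) (h0 : 0 < γ) :
    (wgt γ q) ^ (1 - 2 * γ / (1 + 2 * γ)) ≤ 2 * (1 + |q|) := by
  have hq : (1:ℝ) ≤ 1 + |q| := by linarith [abs_nonneg q]
  have e : 1 - 2 * γ / (1 + 2 * γ) = (1 + 2 * γ)⁻¹ := by field_simp; ring
  rw [e]
  have hi0 : 0 ≤ (1 + 2 * γ)⁻¹ := by positivity
  have hi1 : (1 + 2 * γ)⁻¹ ≤ 1 := inv_le_one_of_one_le₀ (by linarith)
  have hone : (1:ℝ) ≤ (1 + |q|) ^ (1 + 2 * γ) := Real.one_le_rpow hq (by linarith)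
  have hw : wgt γ q ≤ 2 * (1 + |q|) ^ (1 + 2 * γ) := by
    unfold wgt
    split_ifs
    · linarith
    · have : (1 + |q|) ^ (-(γ / 2)) ≤ 1 := Real.rpow_le_one_of_one_le_of_nonpos hq (by linarith)
      linarith
  have hw0 : 0 ≤ wgt γ q := by
    unfold wgt
    split_ifs <;> positivity
  calc _ ≤ (2 * (1 + |q|) ^ (1 + 2 * γ)) ^ (1 + 2 * γ)⁻¹ := Real.rpow_le_rpow hw0 hw hi0
    _ = 2 ^ (1 + 2 * γ)⁻¹ * (1 + |q|) := by
        rw [Real.mul_rpow (by norm_num) (by positivity), Real.rpow_rpow_inv (by linarith) (by linarith)]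
    _ ≤ 2 * (1 + |q|) := by
        gcongr
        calc (2:ℝ) ^ (1 + 2 * γ)⁻¹ ≤ 2 ^ (1:ℝ) := Real.rpow_le_rpow_of_exponent_le (by norm_num) hi1
          _ = 2 := Real.rpow_one 2

lemma log_half (τ : ℝ) (h : 0 ≤ τ) : 1 / 2 ≤ Real.log (2 + τ) := by
  have h1 : Real.log 2 ≤ Real.log (2 + τ) := Real.log_le_log (by norm_num) (by linarith)
  linarith [Real.log_two_gt_d9]

lemma log_bound (τ r : ℝ) (h : 0 ≤ τ) (hr : 0 ≤ r) :
    Real.log (2 + τ + r) ^ 4 ≤ 17 ^ 4 * Real.log (2 + τ) ^ 4 * (1 + r / (1 + τ)) ^ (1 / 2 : ℝ) := by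
  have hA : 0 < 1 + τ := by linarith
  have hX : 1 ≤ 1 + r / (1 + τ) := by have : 0 ≤ r / (1 + τ) := by positivity
                                      linarith
  have hL := log_half τ h
  set X := 1 + r / (1 + τ) with hXd
  have h1 : 2 + τ + r ≤ (2 + τ) * X := by
    have : r = (1 + τ) * (r / (1 + τ)) := by field_simp
    have h2 : 0 ≤ r / (1 + τ) := by positivity
    rw [hXd]; nlinarith
  have h2 : Real.log (2 + τ + r) ≤ Real.log (2 + τ) + Real.log X := by
    rw [← Real.log_mul (by linarith) (by linarith)]
    exact Real.log_le_log (by linarith) h1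
  have h3 : Real.log X ≤ X ^ (1 / 8 : ℝ) / (1 / 8) :=
    Real.log_le_rpow_div (by linarith) (by norm_num)
  have h4 : 1 ≤ X ^ (1 / 8 : ℝ) := Real.one_le_rpow hX (by norm_num)
  have h5 : Real.log (2 + τ + r) ≤ 17 * Real.log (2 + τ) * X ^ (1 / 8 : ℝ) := by nlinarith
  have h6 : 0 ≤ Real.log (2 + τ + r) := Real.log_nonneg (by linarith)
  calc _ ≤ (17 * Real.log (2 + τ) * X ^ (1 / 8 : ℝ)) ^ 4 := by gcongr
    _ = 17 ^ 4 * Real.log (2 + τ) ^ 4 * (X ^ (1 / 8 : ℝ)) ^ 4 := by ring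
    _ = _ := by
        rw [← Real.rpow_natCast (X ^ (1 / 8 : ℝ)), ← Real.rpow_mul (by linarith)]
        norm_num

lemma ptw (γ τ r : ℝ) (h0 : 0 < γ) (h : 0 ≤ τ) (hr : 0 ≤ r) :
    r ^ 2 * ((Real.log (2 + τ + r)) ^ 4
              * (wgt γ (r - τ)) ^ (1 - 2 * γ / (1 + 2 * γ))
            / ((1 + τ + r) ^ 4 * (1 + |r - τ|) ^ 2)) ≤
     (4 * 17 ^ 4 * Real.log (2 + τ) ^ 4 / (1 + τ) ^ 2) *
       (1 + |r - τ|) ^ (-(1 + 1 / (2 * Real.log (2 + τ)))) := by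
  have hlb := log_bound τ r h hr
  have hwb := wgt_bound γ (r - τ) h0
  have hL := log_half τ h
  set L := Real.log (2 + τ) with hLd
  have hA : 0 < 1 + τ := by linarith
  have hX : 1 ≤ 1 + r / (1 + τ) := by have : 0 ≤ r / (1 + τ) := by positivity
                                      linarith
  have hAX : 1 + τ + r = (1 + τ) * (1 + r / (1 + τ)) := by field_simp
  have hQ1 : 1 ≤ 1 + |r - τ| := by linarith [abs_nonneg (r - τ)]
  have hQ2 : 1 + |r - τ| ≤ 1 + τ + r := by
    have : |r - τ| ≤ τ + r := abs_le.2 ⟨by linarith, by linarith⟩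
    linarith
  have hrA : r ≤ 1 + τ + r := by linarith
  set Q := 1 + |r - τ|
  set X := 1 + r / (1 + τ)
  set A := 1 + τ with hAd
  rw [hAX] at hQ2 hrA ⊢
  have hε0 : 0 < 1 / (2 * L) := by positivity
  have hε1 : 1 / (2 * L) ≤ 1 := by rw [div_le_one (by positivity)]; linarith
  set ε := 1 / (2 * L) with hεd
  have hX0 : 0 < X := by linarith
  have hQ0 : 0 < Q := by linarith
  have hAε : A ^ ε ≤ 2 := by
    rw [Real.rpow_def_of_pos hA]
    have h1 : Real.log A ≤ L := Real.log_le_log hA (by linarith)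
    have h2 : Real.log A * ε ≤ 1 / 2 := by
      calc _ ≤ L * ε := by gcongr
        _ = 1 / 2 := by rw [hεd]; field_simp
    have h3 : Real.exp (1 / 2) ≤ 2 := by
      rw [← Real.le_log_iff_exp_le (by norm_num)]
      linarith [Real.log_two_gt_d9]
    exact (Real.exp_le_exp.2 h2).trans h3
  have hkey : X ^ (-(3 / 2) : ℝ) ≤ 2 * Q ^ (-ε) := by
    calc X ^ (-(3 / 2) : ℝ) ≤ X ^ (-ε) := Real.rpow_le_rpow_of_exponent_le hX (by linarith)
      _ = A ^ ε * (A * X) ^ (-ε) := by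
          rw [Real.mul_rpow hA.le hX0.le, ← mul_assoc, ← Real.rpow_add hA]; simp
      _ ≤ 2 * Q ^ (-ε) := by
          gcongr ?_ * ?_
          exact Real.rpow_le_rpow_of_nonpos hQ0 hQ2 (by linarith)
  have hXe : X ^ (-(3 / 2) : ℝ) = X ^ (1 / 2 : ℝ) / X ^ 2 := by
    rw [← Real.rpow_natCast X 2, ← Real.rpow_sub hX0]; norm_num
  have hQe : Q ^ (-(1 + ε)) = Q ^ (-ε) / Q := by
    rw [← Real.rpow_sub_one hQ0.ne']; congr 1; ring
  have hlog0 : 0 ≤ Real.log (2 + τ + r) := Real.log_nonneg (by linarith)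
  have hw0 : 0 ≤ wgt γ (r - τ) ^ (1 - 2 * γ / (1 + 2 * γ)) := by
    apply Real.rpow_nonneg
    unfold wgt
    split_ifs <;> positivity
  calc _ ≤ (A * X) ^ 2 * ((17 ^ 4 * L ^ 4 * X ^ (1 / 2 : ℝ)) * (2 * Q) / ((A * X) ^ 4 * Q ^ 2)) := by
        gcongr
    _ = 2 * 17 ^ 4 * L ^ 4 / A ^ 2 * (X ^ (1 / 2 : ℝ) / X ^ 2) / Q := by
        field_simp
    _ ≤ 2 * 17 ^ 4 * L ^ 4 / A ^ 2 * (2 * Q ^ (-ε)) / Q := by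
        rw [← hXe]; gcongr
    _ = _ := by rw [hQe]; ring

lemma inner_bound (γ : ℝ) (h0 : 0 < γ) : ∃ K : ℝ, 0 < K ∧ ∀ τ : ℝ, 0 ≤ τ →
    Real.sqrt (∫ y : Fin 3 → ℝ,
          (Real.log (2 + τ + rad3 y)) ^ 4
              * (wgt γ (rad3 y - τ)) ^ (1 - 2 * γ / (1 + 2 * γ))
            / ((1 + τ + rad3 y) ^ 4 * (1 + |rad3 y - τ|) ^ 2))
      ≤ K * Real.log (2 + τ) ^ 3 / (1 + τ) := by
  set c := 3 * volume.real (Metric.ball (0 : EuclideanSpace ℝ (Fin 3)) 1) with hc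
  have hc0 : 0 ≤ c := by positivity
  refine ⟨Real.sqrt (c * (32 * 17 ^ 4)) + 1, by positivity, fun τ h => ?_⟩
  have hL := log_half τ h
  obtain ⟨c', hc', hrad⟩ := aux_radial (fun r => (Real.log (2 + τ + r)) ^ 4
              * (wgt γ (r - τ)) ^ (1 - 2 * γ / (1 + 2 * γ))
            / ((1 + τ + r) ^ 4 * (1 + |r - τ|) ^ 2))
  rw [← hc] at hc'
  subst hc'
  rw [hrad]
  have hpt := fun r (hr : r ∈ Set.Ioi (0:ℝ)) => ptw γ τ r h0 h (le_of_lt hr)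
  set L := Real.log (2 + τ) with hLd
  have hL0 : 0 < L := by linarith
  have hA : 0 < 1 + τ := by linarith
  have hε0 : 0 < 1 / (2 * L) := by positivity
  have hI : (∫ r in Set.Ioi (0:ℝ), r ^ 2 * ((Real.log (2 + τ + r)) ^ 4
              * (wgt γ (r - τ)) ^ (1 - 2 * γ / (1 + 2 * γ))
            / ((1 + τ + r) ^ 4 * (1 + |r - τ|) ^ 2))) ≤ 32 * 17 ^ 4 * (L ^ 3 / (1 + τ)) ^ 2 := by
    calc _ ≤ ∫ r in Set.Ioi (0:ℝ), (4 * 17 ^ 4 * L ^ 4 / (1 + τ) ^ 2) *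
              (1 + |r - τ|) ^ (-(1 + 1 / (2 * L))) := by
          refine setIntegral_mono_of_nonneg ?_ hpt ?_
          · intro r hr
            have hr' : (0:ℝ) < r := hr
            have hw0 : 0 ≤ wgt γ (r - τ) ^ (1 - 2 * γ / (1 + 2 * γ)) := by
              apply Real.rpow_nonneg
              unfold wgt
              split_ifs <;> positivity
            have hlog0 : 0 ≤ Real.log (2 + τ + r) := Real.log_nonneg (by linarith)
            positivity
          · exact ((aux_integrable _ τ hε0).const_mul _).integrableOn
      _ = (4 * 17 ^ 4 * L ^ 4 / (1 + τ) ^ 2) * ∫ r in Set.Ioi (0:ℝ), 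
              (1 + |r - τ|) ^ (-(1 + 1 / (2 * L))) := integral_const_mul _ _
      _ ≤ (4 * 17 ^ 4 * L ^ 4 / (1 + τ) ^ 2) * (2 / (1 / (2 * L))) := by
          gcongr
          exact aux_int2 _ τ hε0
      _ = 16 * 17 ^ 4 * (L ^ 5 * 1) / (1 + τ) ^ 2 := by field_simp; ring
      _ ≤ 16 * 17 ^ 4 * (L ^ 5 * (2 * L)) / (1 + τ) ^ 2 := by gcongr; linarith
      _ = _ := by field_simp; ring
  calc _ ≤ Real.sqrt (c * (32 * 17 ^ 4) * (L ^ 3 / (1 + τ)) ^ 2) := by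
        apply Real.sqrt_le_sqrt
        rw [mul_assoc c]
        exact mul_le_mul_of_nonneg_left hI hc0
    _ = Real.sqrt (c * (32 * 17 ^ 4)) * (L ^ 3 / (1 + τ)) := by
        rw [Real.sqrt_mul (by positivity), Real.sqrt_sq (by positivity)]
    _ ≤ (Real.sqrt (c * (32 * 17 ^ 4)) + 1) * (L ^ 3 / (1 + τ)) := by gcongr; linarith
    _ = _ := by ring

/-- Spacetime bound for the inhomogeneous term: for `γ ∈ (0,1/8]`
there is a constant `C` with
`∫_T^t ‖𝔦 w^{1/2}‖_{L²(ℝ³)} dτ ≤ C log⁴(2+t)` for all `0 ≤ T ≤ t`, where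
`𝔦 = log²(2+s)/((1+s)²(1+|q|) w(q)^{γ/(1+2γ)})`. -/
theorem stmt12 (γ : ℝ) (hγ0 : 0 < γ) (hγ1 : γ ≤ 1 / 8) :
    ∃ C > (0 : ℝ), ∀ T t : ℝ, 0 ≤ T → T ≤ t →
      (∫ τ in Set.Icc T t,
        Real.sqrt (∫ y : Fin 3 → ℝ,
          (Real.log (2 + τ + rad3 y)) ^ 4
              * (wgt γ (rad3 y - τ)) ^ (1 - 2 * γ / (1 + 2 * γ))
            / ((1 + τ + rad3 y) ^ 4 * (1 + |rad3 y - τ|) ^ 2)))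
      ≤ C * (Real.log (2 + t)) ^ 4 := by
  obtain ⟨K, hK, hin⟩ := inner_bound γ hγ0
  refine ⟨K, hK, fun T t hT hTt => ?_⟩
  have ht : 0 ≤ t := hT.trans hTt
  have hLt := log_half t ht
  have hcont : IntegrableOn (fun τ : ℝ => K * Real.log (2 + t) ^ 3 * (1 / (1 + τ))) (Set.Icc T t) := by
    apply ContinuousOn.integrableOn_Icc
    apply ContinuousOn.mul continuousOn_const
    apply ContinuousOn.div continuousOn_const (by fun_prop)
    intro x hx
    have := hx.1
    linarith
  calc _ ≤ ∫ τ in Set.Icc T t, K * Real.log (2 + t) ^ 3 * (1 / (1 + τ)) := by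
        refine setIntegral_mono_of_nonneg (fun τ _ => Real.sqrt_nonneg _) (fun τ hτ => ?_) hcont
        have hτ0 : 0 ≤ τ := hT.trans hτ.1
        refine (hin τ hτ0).trans ?_
        have h1 := log_half τ hτ0
        have h2 : Real.log (2 + τ) ≤ Real.log (2 + t) :=
          Real.log_le_log (by linarith) (by linarith [hτ.2])
        rw [mul_one_div]
        gcongr
    _ = K * Real.log (2 + t) ^ 3 * Real.log ((1 + t) / (1 + T)) := by
        rw [integral_const_mul, integral_Icc_eq_integral_Ioc,
          ← intervalIntegral.integral_of_le hTt,
          intervalIntegral.integral_comp_add_left (fun x => 1 / x) 1,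
          integral_one_div_of_pos (by linarith) (by linarith)]
    _ ≤ K * Real.log (2 + t) ^ 3 * Real.log (2 + t) := by
        have h1 : Real.log ((1 + t) / (1 + T)) ≤ Real.log (2 + t) := by
          apply Real.log_le_log (by apply div_pos <;> linarith)
          rw [div_le_iff₀ (by linarith)]
          nlinarith
        gcongr
    _ = _ := by ring
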